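/- (Explicit averaged speed formula for shears with Ornstein–Uhlenbeck covariance.) Let A > 0 and ρ > 0. Let (Ω, ℱ, P) be a probability space and b : Ω × [0,L] → ℝ jointly measurable such that for P-a.e. ω the path y ↦ b(ω,y) is continuous, E[ b(ω,y) ] = 0 for all y ∈ [0,L], E[ b(ω,s) b(ω,y) ] = ρ e^{−A|s−y|} for all s,y ∈ [0,L], and E[ ‖b(ω,·)‖_∞⁶ ] < ∞. Set enh := ρ · ( e^{−AL}( 4/(L²A⁴) − 1/(3A²) ) + L/(3A) − 4/(L²A⁴) − 5/(3A²) + 4/(L A³) ). Then there exist C > 0 and δ₀ > 0 such that for all δ ∈ (0, δ₀): | E[ c*(δ·b(ω,·)) ] − c₀ − (c₀ δ²/2)·enh | ≤ C δ³. -/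

import Mathlib

open Real Set MeasureTheory intervalIntegral

/-- The principal Neumann eigenvalue `μ_b(λ)` of
`ψ'' + (λ² + λ b(y) + a) ψ = μ ψ` on `(0, L)`, defined through the Rayleigh
quotient variational characterization
`μ_b(λ) = sup { ∫₀ᴸ (−ψ'² + (λ² + λ b + a) ψ²) / ∫₀ᴸ ψ² : ψ ∈ H¹((0,L)), ψ ≠ 0 }`. -/
noncomputable def mu (L a : ℝ) (b : ℝ → ℝ) (l : ℝ) : ℝ :=
  sSup { m : ℝ | ∃ ψ : ℝ → ℝ, ContDiffOn ℝ 1 ψ (Icc 0 L) ∧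
    (∃ y ∈ Icc (0 : ℝ) L, ψ y ≠ 0) ∧
    m = (∫ y in (0 : ℝ)..L, (-(deriv ψ y) ^ 2 + (l ^ 2 + l * b y + a) * (ψ y) ^ 2)) /
        (∫ y in (0 : ℝ)..L, (ψ y) ^ 2) }

/-- The KPP minimal front speed `c*(b) = inf_{λ>0} μ_b(λ)/λ`. -/
noncomputable def cstar (L a : ℝ) (b : ℝ → ℝ) : ℝ :=
  sInf { v : ℝ | ∃ l : ℝ, 0 < l ∧ v = mu L a b l / l }

/-- The sup norm `‖b‖_∞ = sup_{y ∈ [0,L]} |b(y)|` of a shear on the cross-section. -/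
noncomputable def supNorm (L : ℝ) (b : ℝ → ℝ) : ℝ :=
  sSup ((fun y => |b y|) '' Icc 0 L)

/-!
With `w = ψ' / ψ` the Neumann problem `ψ'' + V ψ = ν ψ` becomes the Riccati equation
`V + w' + w² = ν` with `w = 0` at both ends. Completing the square in the Rayleigh quotient shows
that an approximate solution, one for which `V + w' + w²` takes values in `[K₁, K₂]`, traps the
principal eigenvalue between `K₁` and `K₂`. One Picard step for the Riccati equation gives
`ν = ⟨V⟩ + ⟨W²⟩ + O(‖V‖³)`, where `⟨·⟩` is the mean over `[0, L]` and `W` is the primitive of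
`V - ⟨V⟩` vanishing at `0`.

Applied to `V = λ δ b`, this makes `c*(δ b)` the infimum over `λ` of
`λ + a / λ + δ ⟨b⟩ + λ δ² ⟨W²⟩` (now with `W` formed from `b`) up to a cubic error, so that AM-GM
gives `c*(δ b) = 2 √a + δ ⟨b⟩ + √a δ² ⟨W²⟩ + O(δ³ ‖b‖³)` when `δ ‖b‖` is small; a crude bound
gives the same estimate when it is not. Taking expectations, Fubini's theorem turns `E ⟨W²⟩` into
integrals of the exponential covariance.
-/

section Primitive

variable {L M : ℝ} {f : ℝ → ℝ}

theorem hasDerivWithinAt_integral_Icc {a b x : ℝ} (hf : ContinuousOn f (Icc a b))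
    (hx : x ∈ Icc a b) : HasDerivWithinAt (fun y => ∫ t in a..y, f t) (f x) (Icc a b) x :=
  have := Fact.mk hx
  integral_hasDerivWithinAt_right
    ((hf.mono (Icc_subset_Icc_right hx.2)).intervalIntegrable_of_Icc hx.1)
    (hf.stronglyMeasurableAtFilter_nhdsWithin measurableSet_Icc x) (hf x hx)

theorem continuousOn_integral_Icc {a b : ℝ} (hf : ContinuousOn f (Icc a b)) :
    ContinuousOn (fun y => ∫ t in a..y, f t) (Icc a b) :=
  fun _ hx => (hasDerivWithinAt_integral_Icc hf hx).continuousWithinAt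

theorem abs_integral_le_mul (h : ∀ y ∈ Icc 0 L, |f y| ≤ M) {y : ℝ} (hy : y ∈ Icc 0 L) :
    |∫ t in (0 : ℝ)..y, f t| ≤ M * L := by
  have hM : 0 ≤ M := (abs_nonneg _).trans (h y hy)
  have hI : ‖∫ t in (0 : ℝ)..y, f t‖ ≤ M * |y - 0| :=
    norm_integral_le_of_norm_le_const fun t ht => by
      rw [uIoc_of_le hy.1] at ht
      exact h t ⟨ht.1.le, ht.2.trans hy.2⟩
  rw [sub_zero, abs_of_nonneg hy.1] at hI
  exact hI.trans (mul_le_mul_of_nonneg_left hy.2 hM)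

theorem abs_intervalAverage_le (hL : 0 < L) (h : ∀ y ∈ Icc 0 L, |f y| ≤ M) :
    |⨍ y in (0 : ℝ)..L, f y| ≤ M := by
  rw [interval_average_eq_div, sub_zero, abs_div, abs_of_pos hL, div_le_iff₀ hL]
  exact abs_integral_le_mul h ⟨hL.le, le_rfl⟩

end Primitive

section PrincipalEigenvalue

/-- The Rayleigh quotients of the operator `ψ'' + V ψ` on `(0, L)` with Neumann boundary
conditions, over nonzero `C¹` test functions. -/
def rayleighQuotients (L : ℝ) (V : ℝ → ℝ) : Set ℝ :=
  {m | ∃ ψ : ℝ → ℝ, ContDiffOn ℝ 1 ψ (Icc 0 L) ∧ (∃ y ∈ Icc (0 : ℝ) L, ψ y ≠ 0) ∧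
    m = (∫ y in (0 : ℝ)..L, (-(deriv ψ y) ^ 2 + V y * ψ y ^ 2)) / ∫ y in (0 : ℝ)..L, ψ y ^ 2}

/-- The principal Neumann eigenvalue of `ψ'' + V ψ` on `(0, L)`; the `mu` of the KPP problem is
the case `V = λ² + λ b + a`. -/
noncomputable def principalEigenvalue (L : ℝ) (V : ℝ → ℝ) : ℝ :=
  sSup (rayleighQuotients L V)

variable {L K : ℝ} {V f ψ : ℝ → ℝ}

theorem integral_sq_pos (hL : 0 < L) (hψ : ContinuousOn ψ (Icc 0 L))
    (hne : ∃ y ∈ Icc (0 : ℝ) L, ψ y ≠ 0) : 0 < ∫ y in (0 : ℝ)..L, ψ y ^ 2 :=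
  have ⟨c, hc, hc0⟩ := hne
  integral_pos hL (hψ.pow 2) (fun _ _ => sq_nonneg _) ⟨c, hc, sq_pos_of_ne_zero hc0⟩

-- The values of `deriv ψ` at the endpoints are junk, since `ψ` is arbitrary outside `[0, L]`.
theorem integral_deriv_sq_eq_derivWithin (hL : 0 ≤ L) (V ψ : ℝ → ℝ) :
    ∫ y in (0 : ℝ)..L, (-(deriv ψ y) ^ 2 + V y * ψ y ^ 2) =
      ∫ y in (0 : ℝ)..L, (-(derivWithin ψ (Icc 0 L) y) ^ 2 + V y * ψ y ^ 2) :=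
  integral_congr_Ioo_of_le hL fun y hy => by
    simp only [derivWithin_of_mem_nhds (Icc_mem_nhds hy.1 hy.2)]

theorem integral_mul_sq_add_eq_zero (hL : 0 < L) (hψ : ContDiffOn ℝ 1 ψ (Icc 0 L))
    (hf : ContinuousOn f (Icc 0 L)) (hf0 : ∫ t in (0 : ℝ)..L, f t = 0) :
    ∫ y in (0 : ℝ)..L, (f y * ψ y ^ 2 +
      (∫ t in (0 : ℝ)..y, f t) * (2 * ψ y * derivWithin ψ (Icc 0 L) y)) = 0 := by
  have hψc := hψ.continuousOn
  have hψ' := hψ.continuousOn_derivWithin (uniqueDiffOn_Icc hL) le_rfl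
  have hw := continuousOn_integral_Icc hf
  rw [integral_eq_sub_of_hasDerivAt_of_le (f := fun y => (∫ t in (0 : ℝ)..y, f t) * ψ y ^ 2) hL.le
    (hw.mul (hψc.pow 2))]
  · simp [hf0]
  · intro y hy
    have hy' := Icc_mem_nhds hy.1 hy.2
    have hwy := (hasDerivWithinAt_integral_Icc hf (Ioo_subset_Icc_self hy)).hasDerivAt hy'
    have hψy := (hψ.differentiableOn one_ne_zero y (Ioo_subset_Icc_self hy)).hasDerivWithinAt
    exact (hwy.mul ((hψy.hasDerivAt hy').pow 2)).congr_deriv (by simp)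
  · exact ContinuousOn.intervalIntegrable_of_Icc hL.le (by fun_prop)

-- Completing the square; `w y = ∫ t in 0..y, f t` plays the role of the logarithmic derivative
-- `ψ' / ψ` of an eigenfunction, which turns the eigenvalue equation into `V + w' + w² = const`.
theorem rayleigh_add_integral_sq (hL : 0 < L) (hV : ContinuousOn V (Icc 0 L))
    (hψ : ContDiffOn ℝ 1 ψ (Icc 0 L)) (hf : ContinuousOn f (Icc 0 L))
    (hf0 : ∫ t in (0 : ℝ)..L, f t = 0) :
    (∫ y in (0 : ℝ)..L, (-(deriv ψ y) ^ 2 + V y * ψ y ^ 2)) +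
      ∫ y in (0 : ℝ)..L, (derivWithin ψ (Icc 0 L) y - (∫ t in (0 : ℝ)..y, f t) * ψ y) ^ 2 =
    ∫ y in (0 : ℝ)..L, (V y + f y + (∫ t in (0 : ℝ)..y, f t) ^ 2) * ψ y ^ 2 := by
  have hψc := hψ.continuousOn
  have hψ' := hψ.continuousOn_derivWithin (uniqueDiffOn_Icc hL) le_rfl
  have hw := continuousOn_integral_Icc hf
  have hint {g : ℝ → ℝ} (hg : ContinuousOn g (Icc 0 L)) : IntervalIntegrable g volume 0 L :=
    hg.intervalIntegrable_of_Icc hL.le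
  rw [integral_deriv_sq_eq_derivWithin hL.le,
    ← intervalIntegral.integral_add (hint (by fun_prop)) (hint (by fun_prop))]
  refine (add_eq_left.2 (integral_mul_sq_add_eq_zero hL hψ hf hf0)).symm.trans ?_
  rw [← intervalIntegral.integral_add (hint (by fun_prop)) (hint (by fun_prop))]
  congr 1 with y
  ring

theorem nonempty_rayleighQuotients (hL : 0 ≤ L) (V : ℝ → ℝ) : (rayleighQuotients L V).Nonempty :=
  ⟨_, fun _ => 1, contDiffOn_const, ⟨0, ⟨le_rfl, hL⟩, one_ne_zero⟩, rfl⟩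

theorem rayleighQuotients_le_of_riccati_le (hL : 0 < L) (hV : ContinuousOn V (Icc 0 L))
    (hf : ContinuousOn f (Icc 0 L)) (hf0 : ∫ t in (0 : ℝ)..L, f t = 0)
    (hK : ∀ y ∈ Icc 0 L, V y + f y + (∫ t in (0 : ℝ)..y, f t) ^ 2 ≤ K) :
    K ∈ upperBounds (rayleighQuotients L V) := by
  rintro m ⟨ψ, hψ, hne, rfl⟩
  have hψc := hψ.continuousOn
  have hw := continuousOn_integral_Icc hf
  have hsq : 0 ≤ ∫ y in (0 : ℝ)..L,
      (derivWithin ψ (Icc 0 L) y - (∫ t in (0 : ℝ)..y, f t) * ψ y) ^ 2 :=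
    intervalIntegral.integral_nonneg hL.le fun _ _ => sq_nonneg _
  rw [div_le_iff₀ (integral_sq_pos hL hψc hne), ← intervalIntegral.integral_const_mul]
  calc
    _ ≤ ∫ y in (0 : ℝ)..L, (V y + f y + (∫ t in (0 : ℝ)..y, f t) ^ 2) * ψ y ^ 2 := by
      rw [← rayleigh_add_integral_sq hL hV hψ hf hf0]
      exact le_add_of_nonneg_right hsq
    _ ≤ ∫ y in (0 : ℝ)..L, K * ψ y ^ 2 :=
      integral_mono_on hL.le (ContinuousOn.intervalIntegrable_of_Icc hL.le (by fun_prop))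
        (ContinuousOn.intervalIntegrable_of_Icc hL.le (by fun_prop))
        fun y hy => mul_le_mul_of_nonneg_right (hK y hy) (sq_nonneg _)

theorem bddAbove_rayleighQuotients (hL : 0 < L) (hV : ContinuousOn V (Icc 0 L)) :
    BddAbove (rayleighQuotients L V) := by
  obtain ⟨K, hK⟩ := isCompact_Icc.bddAbove_image hV
  exact ⟨K, rayleighQuotients_le_of_riccati_le hL hV (f := fun _ => 0) continuousOn_const (by simp)
    fun y hy => by simpa using hK (mem_image_of_mem V hy)⟩

theorem principalEigenvalue_le_of_riccati_le (hL : 0 < L) (hV : ContinuousOn V (Icc 0 L))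
    (hf : ContinuousOn f (Icc 0 L)) (hf0 : ∫ t in (0 : ℝ)..L, f t = 0)
    (hK : ∀ y ∈ Icc 0 L, V y + f y + (∫ t in (0 : ℝ)..y, f t) ^ 2 ≤ K) :
    principalEigenvalue L V ≤ K :=
  csSup_le (nonempty_rayleighQuotients hL.le V)
    (rayleighQuotients_le_of_riccati_le hL hV hf hf0 hK)

theorem hasDerivWithinAt_exp_integral (hw : ContinuousOn f (Icc 0 L)) {y : ℝ}
    (hy : y ∈ Icc 0 L) : HasDerivWithinAt (fun y => exp (∫ t in (0 : ℝ)..y, f t))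
      (exp (∫ t in (0 : ℝ)..y, f t) * f y) (Icc 0 L) y :=
  (hasDerivWithinAt_integral_Icc hw hy).exp

theorem contDiffOn_exp_integral (hL : 0 < L) (hf : ContinuousOn f (Icc 0 L)) :
    ContDiffOn ℝ 1 (fun y => exp (∫ t in (0 : ℝ)..y, f t)) (Icc 0 L) := by
  have hU := uniqueDiffOn_Icc hL
  refine (contDiffOn_one_iff_derivWithin hU).2
    ⟨fun y hy => (hasDerivWithinAt_exp_integral hf hy).differentiableWithinAt, ?_⟩
  refine ContinuousOn.congr (f := fun y => exp (∫ t in (0 : ℝ)..y, f t) * f y)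
    ((continuousOn_integral_Icc hf).rexp.mul hf) fun y hy => ?_
  exact (hasDerivWithinAt_exp_integral hf hy).derivWithin (hU y hy)

theorem le_principalEigenvalue_of_le_riccati (hL : 0 < L) (hV : ContinuousOn V (Icc 0 L))
    (hf : ContinuousOn f (Icc 0 L)) (hf0 : ∫ t in (0 : ℝ)..L, f t = 0)
    (hK : ∀ y ∈ Icc 0 L, K ≤ V y + f y + (∫ t in (0 : ℝ)..y, f t) ^ 2) :
    K ≤ principalEigenvalue L V := by
  have hw := continuousOn_integral_Icc hf
  let ψ : ℝ → ℝ := fun y => exp (∫ s in (0 : ℝ)..y, ∫ t in (0 : ℝ)..s, f t)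
  have hψ : ContDiffOn ℝ 1 ψ (Icc 0 L) := contDiffOn_exp_integral hL hw
  have hψc := hψ.continuousOn
  have hψ' : ∀ y ∈ Icc 0 L, derivWithin ψ (Icc 0 L) y = ψ y * ∫ t in (0 : ℝ)..y, f t :=
    fun y hy => (hasDerivWithinAt_exp_integral hw hy).derivWithin (uniqueDiffOn_Icc hL y hy)
  have hne : ∃ y ∈ Icc (0 : ℝ) L, ψ y ≠ 0 := ⟨0, ⟨le_rfl, hL.le⟩, (exp_pos _).ne'⟩
  have hsq : ∫ y in (0 : ℝ)..L,
      (derivWithin ψ (Icc 0 L) y - (∫ t in (0 : ℝ)..y, f t) * ψ y) ^ 2 = 0 := by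
    rw [integral_congr (g := fun _ => 0) fun y hy => ?_, intervalIntegral.integral_zero]
    rw [uIcc_of_le hL.le] at hy
    simp only [hψ' y hy]
    ring
  refine le_csSup_of_le (bddAbove_rayleighQuotients hL hV) ⟨ψ, hψ, hne, rfl⟩ ?_
  have hR := rayleigh_add_integral_sq hL hV hψ hf hf0
  rw [hsq, add_zero] at hR
  rw [le_div_iff₀ (integral_sq_pos hL hψc hne), ← intervalIntegral.integral_const_mul, hR]
  exact integral_mono_on hL.le (ContinuousOn.intervalIntegrable_of_Icc hL.le (by fun_prop))
    (ContinuousOn.intervalIntegrable_of_Icc hL.le (by fun_prop))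
    fun y hy => mul_le_mul_of_nonneg_right (hK y hy) (sq_nonneg _)

theorem principalEigenvalue_le_add {V' : ℝ → ℝ} (hL : 0 < L) (hV : ContinuousOn V (Icc 0 L))
    (hV' : ContinuousOn V' (Icc 0 L)) (hK : ∀ y ∈ Icc 0 L, V y ≤ V' y + K) :
    principalEigenvalue L V ≤ principalEigenvalue L V' + K := by
  refine csSup_le (nonempty_rayleighQuotients hL.le V) ?_
  rintro m ⟨ψ, hψ, hne, rfl⟩
  have hψc := hψ.continuousOn
  have hψ' := hψ.continuousOn_derivWithin (uniqueDiffOn_Icc hL) le_rfl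
  have hint {g : ℝ → ℝ} (hg : ContinuousOn g (Icc 0 L)) : IntervalIntegrable g volume 0 L :=
    hg.intervalIntegrable_of_Icc hL.le
  have hpos := integral_sq_pos hL hψc hne
  refine le_trans ?_ (add_le_add_left
    (le_csSup (bddAbove_rayleighQuotients hL hV') ⟨ψ, hψ, hne, rfl⟩) K)
  rw [div_add' _ _ _ hpos.ne', div_le_div_iff_of_pos_right hpos,
    integral_deriv_sq_eq_derivWithin hL.le, integral_deriv_sq_eq_derivWithin hL.le,
    ← intervalIntegral.integral_const_mul,
    ← intervalIntegral.integral_add (hint (by fun_prop)) (hint (by fun_prop))]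
  refine integral_mono_on hL.le (hint (by fun_prop)) (hint (by fun_prop)) fun y hy => ?_
  linarith [mul_le_mul_of_nonneg_right (hK y hy) (sq_nonneg (ψ y))]

theorem principalEigenvalue_add_const (hL : 0 < L) (hV : ContinuousOn V (Icc 0 L)) (K : ℝ) :
    principalEigenvalue L (fun y => V y + K) = principalEigenvalue L V + K := by
  have hVK : ContinuousOn (fun y => V y + K) (Icc 0 L) := hV.add continuousOn_const
  refine le_antisymm (principalEigenvalue_le_add hL hVK hV fun _ _ => le_rfl) ?_
  rw [← le_sub_iff_add_le, sub_eq_add_neg]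
  exact principalEigenvalue_le_add hL hV hVK fun y _ => (add_neg_cancel_right (V y) K).ge

theorem abs_principalEigenvalue_le (hL : 0 < L) (hV : ContinuousOn V (Icc 0 L))
    (h : ∀ y ∈ Icc 0 L, |V y| ≤ K) : |principalEigenvalue L V| ≤ K :=
  abs_le.2
    ⟨le_principalEigenvalue_of_le_riccati hL hV (f := fun _ => 0) continuousOn_const (by simp)
      fun y hy => by simpa using (abs_le.1 (h y hy)).1,
    principalEigenvalue_le_of_riccati_le hL hV (f := fun _ => 0) continuousOn_const (by simp)
      fun y hy => by simpa using (abs_le.1 (h y hy)).2⟩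

end PrincipalEigenvalue

section SecondOrderExpansion

/-- The primitive of the fluctuation of `V` about its mean over `(0, L)`. It is `-χ'`, where `χ`
solves the Neumann corrector problem `χ'' = ⟨V⟩ - V`. -/
noncomputable def centeredPrimitive (L : ℝ) (V : ℝ → ℝ) (y : ℝ) : ℝ :=
  ∫ t in (0 : ℝ)..y, (V t - ⨍ s in (0 : ℝ)..L, V s)

/-- The Dirichlet energy `⟨χ'²⟩` of the corrector: the part of `principalEigenvalue L V` that is
quadratic in `V`, and the coefficient of the quadratic speed enhancement. -/
noncomputable def enhancement (L : ℝ) (V : ℝ → ℝ) : ℝ :=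
  ⨍ y in (0 : ℝ)..L, centeredPrimitive L V y ^ 2

variable {L M : ℝ} {V : ℝ → ℝ}

theorem centeredPrimitive_eq (hV : ContinuousOn V (Icc 0 L)) {y : ℝ} (hy : y ∈ Icc 0 L) :
    centeredPrimitive L V y = (∫ t in (0 : ℝ)..y, V t) - y * ⨍ s in (0 : ℝ)..L, V s := by
  have hVy := (hV.mono (Icc_subset_Icc_right hy.2)).intervalIntegrable_of_Icc (μ := volume) hy.1
  rw [centeredPrimitive, intervalIntegral.integral_sub hVy intervalIntegrable_const,
    intervalIntegral.integral_const, sub_zero, smul_eq_mul]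

theorem centeredPrimitive_self (hL : 0 < L) (hV : ContinuousOn V (Icc 0 L)) :
    centeredPrimitive L V L = 0 := by
  rw [centeredPrimitive_eq hV (right_mem_Icc.2 hL.le), interval_average_eq_div, sub_zero,
    mul_div_cancel₀ _ hL.ne', sub_self]

theorem continuousOn_centeredPrimitive (hV : ContinuousOn V (Icc 0 L)) :
    ContinuousOn (centeredPrimitive L V) (Icc 0 L) :=
  continuousOn_integral_Icc (hV.sub continuousOn_const)

theorem abs_centeredPrimitive_le (hL : 0 < L) (h : ∀ y ∈ Icc 0 L, |V y| ≤ M) {y : ℝ}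
    (hy : y ∈ Icc 0 L) : |centeredPrimitive L V y| ≤ 2 * M * L := by
  rw [two_mul]
  exact abs_integral_le_mul (fun t ht => (abs_sub _ _).trans
    (add_le_add (h t ht) (abs_intervalAverage_le hL h))) hy

theorem centeredPrimitive_sq_le (hL : 0 < L) (h : ∀ y ∈ Icc 0 L, |V y| ≤ M) {y : ℝ}
    (hy : y ∈ Icc 0 L) : |centeredPrimitive L V y ^ 2| ≤ 4 * L ^ 2 * M ^ 2 := by
  rw [abs_pow]
  exact (pow_le_pow_left₀ (abs_nonneg _) (abs_centeredPrimitive_le hL h hy) 2).trans_eq (by ring)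

theorem enhancement_nonneg (hL : 0 ≤ L) (V : ℝ → ℝ) : 0 ≤ enhancement L V := by
  rw [enhancement, interval_average_eq_div, sub_zero]
  exact div_nonneg (intervalIntegral.integral_nonneg hL fun _ _ => sq_nonneg _) hL

theorem enhancement_le (hL : 0 < L) (h : ∀ y ∈ Icc 0 L, |V y| ≤ M) :
    enhancement L V ≤ 4 * L ^ 2 * M ^ 2 :=
  (le_abs_self _).trans
    (abs_intervalAverage_le hL fun _ hy => centeredPrimitive_sq_le hL h hy)

theorem intervalAverage_const_mul (c : ℝ) (V : ℝ → ℝ) :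
    ⨍ y in (0 : ℝ)..L, c * V y = c * ⨍ y in (0 : ℝ)..L, V y := by
  simp only [interval_average_eq_div, intervalIntegral.integral_const_mul, mul_div_assoc]

theorem centeredPrimitive_const_mul (c : ℝ) (V : ℝ → ℝ) (y : ℝ) :
    centeredPrimitive L (fun t => c * V t) y = c * centeredPrimitive L V y := by
  simp only [centeredPrimitive, intervalAverage_const_mul, ← mul_sub,
    intervalIntegral.integral_const_mul]

theorem enhancement_const_mul (c : ℝ) (V : ℝ → ℝ) :
    enhancement L (fun y => c * V y) = c ^ 2 * enhancement L V := by
  simp only [enhancement, centeredPrimitive_const_mul, mul_pow, intervalAverage_const_mul]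

-- Picard iteration for `V + w' + w² = const`: `w ≈ -(W + W₂)`, where `W` and `W₂` are the
-- centered primitives of `V` and of `W²`, and the constant is `⟨V⟩ + ⟨W²⟩`.
theorem exists_riccati_approx (hL : 0 < L) (hV : ContinuousOn V (Icc 0 L))
    (h : ∀ y ∈ Icc 0 L, |V y| ≤ M) :
    ∃ f : ℝ → ℝ, ContinuousOn f (Icc 0 L) ∧ ∫ t in (0 : ℝ)..L, f t = 0 ∧ ∀ y ∈ Icc 0 L,
      |V y + f y + (∫ t in (0 : ℝ)..y, f t) ^ 2 - ((⨍ s in (0 : ℝ)..L, V s) + enhancement L V)| ≤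
        32 * L ^ 4 * M ^ 3 + 64 * L ^ 6 * M ^ 4 := by
  set W := centeredPrimitive L V
  have hW : ContinuousOn W (Icc 0 L) := continuousOn_centeredPrimitive hV
  have hW2 : ContinuousOn (fun y => W y ^ 2) (Icc 0 L) := hW.pow 2
  set W₂ := centeredPrimitive L fun y => W y ^ 2
  let f y := -((V y - ⨍ s in (0 : ℝ)..L, V s) + (W y ^ 2 - enhancement L V))
  have hf : ∀ y ∈ Icc 0 L, ∫ t in (0 : ℝ)..y, f t = -(W y + W₂ y) := by
    intro y hy
    have hint {g : ℝ → ℝ} (hg : ContinuousOn g (Icc 0 L)) (c : ℝ) :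
        IntervalIntegrable (fun t => g t - c) volume 0 y :=
      ((hg.sub continuousOn_const).mono (Icc_subset_Icc_right hy.2)).intervalIntegrable_of_Icc hy.1
    rw [intervalIntegral.integral_neg, intervalIntegral.integral_add (hint hV _) (hint hW2 _)]
    rfl
  refine ⟨f, ((hV.sub continuousOn_const).add (hW2.sub continuousOn_const)).neg, ?_, ?_⟩
  · have hWL : W L = 0 := centeredPrimitive_self hL hV
    have hW₂L : W₂ L = 0 := centeredPrimitive_self hL hW2
    rw [hf L (right_mem_Icc.2 hL.le), hWL, hW₂L, add_zero, neg_zero]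
  intro y hy
  have hWy : |W y| ≤ 2 * M * L := abs_centeredPrimitive_le hL h hy
  have hW₂y : |W₂ y| ≤ 2 * (4 * L ^ 2 * M ^ 2) * L :=
    abs_centeredPrimitive_le hL (fun t ht => centeredPrimitive_sq_le hL h ht) hy
  calc
    _ = |2 * (W y * W₂ y) + W₂ y ^ 2| := by rw [hf y hy]; congr 1; ring
    _ ≤ 2 * (|W y| * |W₂ y|) + |W₂ y| ^ 2 := by
      refine (abs_add_le _ _).trans_eq ?_
      rw [abs_mul, abs_mul, abs_two, abs_pow]
    _ ≤ 2 * ((2 * M * L) * (2 * (4 * L ^ 2 * M ^ 2) * L)) + (2 * (4 * L ^ 2 * M ^ 2) * L) ^ 2 := by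
      gcongr
      exact (abs_nonneg _).trans hWy
    _ = _ := by ring

theorem abs_principalEigenvalue_sub_le (hL : 0 < L) (hV : ContinuousOn V (Icc 0 L))
    (h : ∀ y ∈ Icc 0 L, |V y| ≤ M) :
    |principalEigenvalue L V - ((⨍ s in (0 : ℝ)..L, V s) + enhancement L V)| ≤
      32 * L ^ 4 * M ^ 3 + 64 * L ^ 6 * M ^ 4 := by
  obtain ⟨f, hf, hf0, hK⟩ := exists_riccati_approx hL hV h
  rw [abs_sub_le_iff, sub_le_iff_le_add, sub_le_comm]
  exact ⟨principalEigenvalue_le_of_riccati_le hL hV hf hf0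
      fun y hy => sub_le_iff_le_add.1 (abs_sub_le_iff.1 (hK y hy)).1,
    le_principalEigenvalue_of_le_riccati hL hV hf hf0
      fun y hy => sub_le_comm.1 (abs_sub_le_iff.1 (hK y hy)).2⟩

end SecondOrderExpansion

section FrontSpeed

variable {L a l M : ℝ} {b : ℝ → ℝ}

theorem mu_eq_add_principalEigenvalue (hL : 0 < L) (hb : ContinuousOn b (Icc 0 L)) (a l : ℝ) :
    mu L a b l = l ^ 2 + a + principalEigenvalue L fun y => l * b y := by
  have hlb : ContinuousOn (fun y => l * b y) (Icc 0 L) := continuousOn_const.mul hb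
  rw [add_comm, ← principalEigenvalue_add_const hL hlb]
  change principalEigenvalue L (fun y => l ^ 2 + l * b y + a) = _
  congr 1 with y
  ring

theorem mu_div_eq (hL : 0 < L) (hb : ContinuousOn b (Icc 0 L)) (a l : ℝ) :
    mu L a b l / l = l + a / l + principalEigenvalue L (fun y => l * b y) / l := by
  rw [mu_eq_add_principalEigenvalue hL hb, add_div, add_div, pow_two, mul_self_div_self]

theorem abs_const_mul_le (c : ℝ) (h : ∀ y ∈ Icc 0 L, |b y| ≤ M) :
    ∀ y ∈ Icc 0 L, |c * b y| ≤ |c| * M := by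
  intro y hy
  rw [abs_mul]
  exact mul_le_mul_of_nonneg_left (h y hy) (abs_nonneg c)

theorem abs_mu_div_sub_le (hL : 0 < L) (hb : ContinuousOn b (Icc 0 L)) (a : ℝ) (hl : 0 < l)
    (h : ∀ y ∈ Icc 0 L, |b y| ≤ M) : |mu L a b l / l - (l + a / l)| ≤ M := by
  rw [mu_div_eq hL hb a l, add_sub_cancel_left, abs_div, div_le_iff₀' (abs_pos.2 hl.ne')]
  exact abs_principalEigenvalue_le hL (continuousOn_const.mul hb) (abs_const_mul_le l h)

theorem abs_mu_div_sub_le_cubic (hL : 0 < L) (hb : ContinuousOn b (Icc 0 L)) (a : ℝ) (hl : 0 < l)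
    (h : ∀ y ∈ Icc 0 L, |b y| ≤ M) :
    |mu L a b l / l - (l + a / l + ((⨍ y in (0 : ℝ)..L, b y) + l * enhancement L b))| ≤
      32 * L ^ 4 * l ^ 2 * M ^ 3 + 64 * L ^ 6 * l ^ 3 * M ^ 4 := by
  have hlb : ContinuousOn (fun y => l * b y) (Icc 0 L) := continuousOn_const.mul hb
  have hν := abs_principalEigenvalue_sub_le hL hlb (abs_const_mul_le l h)
  rw [intervalAverage_const_mul, enhancement_const_mul, abs_of_pos hl] at hν
  have hdiv : principalEigenvalue L (fun y => l * b y) / l -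
        ((⨍ y in (0 : ℝ)..L, b y) + l * enhancement L b) =
      (principalEigenvalue L (fun y => l * b y) -
        (l * (⨍ y in (0 : ℝ)..L, b y) + l ^ 2 * enhancement L b)) / l := by
    field_simp
  rw [mu_div_eq hL hb a l, add_sub_add_left_eq_sub, hdiv, abs_div, abs_of_pos hl, div_le_iff₀ hl]
  exact hν.trans_eq (by ring)

-- AM-GM for `c = 1`; the weight absorbs a term of `μ_b(λ) / λ` that is linear in `λ`.
theorem two_mul_sqrt_mul_le (ha : 0 ≤ a) (hl : 0 < l) (c : ℝ) :
    2 * √a * c ≤ c ^ 2 * l + a / l := by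
  have hsq : c ^ 2 * l + a / l - 2 * √a * c = (√a - c * l) ^ 2 / l := by
    rw [sub_sq, sq_sqrt ha]
    field_simp
    ring
  rw [← sub_nonneg, hsq]
  positivity

theorem cstar_le (hL : 0 < L) (ha : 0 ≤ a) (hb : ContinuousOn b (Icc 0 L)) (hl : 0 < l) :
    cstar L a b ≤ mu L a b l / l := by
  obtain ⟨M, h⟩ := isCompact_Icc.exists_bound_of_continuousOn hb
  refine csInf_le ⟨-M, ?_⟩ ⟨l, hl, rfl⟩
  rintro _ ⟨k, hk, rfl⟩
  have hk' : 0 ≤ k + a / k := by positivity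
  linarith [(abs_le.1 (abs_mu_div_sub_le hL hb a hk h)).1]

theorem le_cstar {K : ℝ} (h : ∀ l, 0 < l → K ≤ mu L a b l / l) : K ≤ cstar L a b := by
  refine le_csInf ⟨_, 1, one_pos, rfl⟩ ?_
  rintro _ ⟨l, hl, rfl⟩
  exact h l hl

theorem cstar_le_cstar_add {b' : ℝ → ℝ} {ε : ℝ} (hL : 0 < L) (ha : 0 ≤ a)
    (hb : ContinuousOn b (Icc 0 L)) (hb' : ContinuousOn b' (Icc 0 L))
    (h : ∀ y ∈ Icc 0 L, b y ≤ b' y + ε) : cstar L a b ≤ cstar L a b' + ε := by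
  rw [← sub_le_iff_le_add]
  refine le_cstar fun l hl => sub_le_iff_le_add.2 ((cstar_le hL ha hb hl).trans ?_)
  rw [mu_div_eq hL hb a l, mu_div_eq hL hb' a l, add_assoc _ _ ε, add_le_add_iff_left,
    div_add' _ _ _ hl.ne', div_le_div_iff_of_pos_right hl]
  refine principalEigenvalue_le_add hL (continuousOn_const.mul hb) (continuousOn_const.mul hb') ?_
  intro y hy
  linarith [mul_le_mul_of_nonneg_left (h y hy) hl.le]

theorem cstar_congr {b' : ℝ → ℝ} (hL : 0 < L) (ha : 0 ≤ a) (hb : ContinuousOn b (Icc 0 L))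
    (h : EqOn b b' (Icc 0 L)) : cstar L a b = cstar L a b' := by
  have hb' : ContinuousOn b' (Icc 0 L) := hb.congr h.symm
  refine le_antisymm ?_ ?_
  · simpa using cstar_le_cstar_add hL ha hb hb' (ε := 0) fun y hy => by simp [h hy]
  · simpa using cstar_le_cstar_add hL ha hb' hb (ε := 0) fun y hy => by simp [h hy]

theorem abs_cstar_sub_le (hL : 0 < L) (ha : 0 < a) (hb : ContinuousOn b (Icc 0 L))
    (h : ∀ y ∈ Icc 0 L, |b y| ≤ M) : |cstar L a b - 2 * √a| ≤ M := by
  have hs : 0 < √a := sqrt_pos.2 ha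
  rw [abs_sub_le_iff, sub_le_iff_le_add, sub_le_comm]
  constructor
  · refine (cstar_le hL ha.le hb hs).trans ?_
    have hμ := (abs_sub_le_iff.1 (abs_mu_div_sub_le hL hb a hs h)).1
    rw [div_sqrt] at hμ
    linarith
  · refine le_cstar fun l hl => ?_
    have hamgm := two_mul_sqrt_mul_le ha.le hl 1
    linarith [(abs_sub_le_iff.1 (abs_mu_div_sub_le hL hb a hl h)).2]

theorem abs_mu_div_sub_le_of_le {T : ℝ} (hL : 0 < L) (hb : ContinuousOn b (Icc 0 L)) (a : ℝ)
    (hl : 0 < l) (hlT : l ≤ T) (h : ∀ y ∈ Icc 0 L, |b y| ≤ M) (hM0 : 0 ≤ M) (hM1 : M ≤ 1) :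
    |mu L a b l / l - (l + a / l + ((⨍ y in (0 : ℝ)..L, b y) + l * enhancement L b))| ≤
      (32 * L ^ 4 * T ^ 2 + 64 * L ^ 6 * T ^ 3) * M ^ 3 := by
  have hM43 : M ^ 4 ≤ M ^ 3 := pow_le_pow_of_le_one hM0 hM1 (by norm_num)
  have hT0 : 0 ≤ T := hl.le.trans hlT
  refine (abs_mu_div_sub_le_cubic hL hb a hl h).trans ?_
  rw [add_mul]
  gcongr

theorem cstar_le_of_abs_le_one {T : ℝ} (hL : 0 < L) (ha : 0 < a) (hT : √a ≤ T)
    (hb : ContinuousOn b (Icc 0 L)) (h : ∀ y ∈ Icc 0 L, |b y| ≤ M) (hM0 : 0 ≤ M) (hM1 : M ≤ 1) :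
    cstar L a b ≤ 2 * √a + (⨍ y in (0 : ℝ)..L, b y) + √a * enhancement L b +
      (32 * L ^ 4 * T ^ 2 + 64 * L ^ 6 * T ^ 3) * M ^ 3 := by
  have hs : 0 < √a := sqrt_pos.2 ha
  have hμ := (abs_sub_le_iff.1 (abs_mu_div_sub_le_of_le hL hb a hs hT h hM0 hM1)).1
  rw [div_sqrt] at hμ
  linarith [cstar_le hL ha.le hb hs]

-- For `λ ≤ T` the expansion of `μ_b(λ) / λ` is uniform in `λ`; for `λ ≥ T` the trivial bound
-- `μ_b(λ) / λ ≥ λ - M` already exceeds the claimed value.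
theorem le_cstar_of_abs_le_one {T : ℝ} (hL : 0 < L) (ha : 0 ≤ a)
    (hT : 2 * √a + 2 + 4 * √a * L ^ 2 ≤ T) (hb : ContinuousOn b (Icc 0 L))
    (h : ∀ y ∈ Icc 0 L, |b y| ≤ M) (hM0 : 0 ≤ M) (hM1 : M ≤ 1) :
    2 * √a + (⨍ y in (0 : ℝ)..L, b y) + √a * enhancement L b -
      (32 * L ^ 4 * T ^ 2 + 64 * L ^ 6 * T ^ 3 + 4 * T * L ^ 4) * M ^ 3 ≤ cstar L a b := by
  set Q := enhancement L b
  have hQ0 : 0 ≤ Q := enhancement_nonneg hL.le b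
  have hQ : Q ≤ 4 * L ^ 2 * M ^ 2 := enhancement_le hL h
  have hT0 : 0 ≤ T := le_trans (by positivity) hT
  refine le_cstar fun l hl => ?_
  rcases le_total l T with hlT | hTl
  · have hμ := (abs_sub_le_iff.1 (abs_mu_div_sub_le_of_le hL hb a hl hlT h hM0 hM1)).2
    have hamgm : 2 * √a * (1 + Q / 2) ≤ (1 + Q / 2) ^ 2 * l + a / l := two_mul_sqrt_mul_le ha hl _
    have hlQ : l * Q ^ 2 / 4 ≤ 4 * T * L ^ 4 * M ^ 3 := by
      calc l * Q ^ 2 / 4 ≤ T * (4 * L ^ 2 * M ^ 2) ^ 2 / 4 := by gcongr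
        _ = 4 * T * L ^ 4 * M ^ 4 := by ring
        _ ≤ 4 * T * L ^ 4 * M ^ 3 := mul_le_mul_of_nonneg_left
          (pow_le_pow_of_le_one hM0 hM1 (by norm_num)) (by positivity)
    linarith
  · have hμ := (abs_sub_le_iff.1 (abs_mu_div_sub_le hL hb a hl h)).2
    have havg : ⨍ y in (0 : ℝ)..L, b y ≤ M := (abs_le.1 (abs_intervalAverage_le hL h)).2
    have hQ1 : √a * Q ≤ 4 * √a * L ^ 2 := by
      calc √a * Q ≤ √a * (4 * L ^ 2 * 1) := by
            gcongr
            exact hQ.trans (by gcongr; exact pow_le_one₀ hM0 hM1)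
        _ = 4 * √a * L ^ 2 := by ring
    have herr : 0 ≤ (32 * L ^ 4 * T ^ 2 + 64 * L ^ 6 * T ^ 3 + 4 * T * L ^ 4) * M ^ 3 := by
      positivity
    have hal : 0 ≤ a / l := by positivity
    linarith

theorem abs_cstar_sub_le_of_one_le (hL : 0 < L) (ha : 0 < a) (hb : ContinuousOn b (Icc 0 L))
    (h : ∀ y ∈ Icc 0 L, |b y| ≤ M) (hM : 1 ≤ M) :
    |cstar L a b - 2 * √a - (⨍ y in (0 : ℝ)..L, b y) - √a * enhancement L b| ≤
      (2 + 4 * √a * L ^ 2) * M ^ 3 := by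
  have hM3 : M ≤ M ^ 3 := le_self_pow₀ hM (by norm_num)
  have hQ : |√a * enhancement L b| ≤ 4 * √a * L ^ 2 * M ^ 3 := by
    rw [abs_of_nonneg (mul_nonneg (sqrt_nonneg a) (enhancement_nonneg hL.le b))]
    calc √a * enhancement L b ≤ √a * (4 * L ^ 2 * M ^ 3) := by
          gcongr
          exact (enhancement_le hL h).trans (by gcongr; norm_num)
      _ = 4 * √a * L ^ 2 * M ^ 3 := by ring
  calc
    _ ≤ |cstar L a b - 2 * √a| + |⨍ y in (0 : ℝ)..L, b y| + |√a * enhancement L b| :=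
      (abs_sub _ _).trans (add_le_add_left (abs_sub _ _) _)
    _ ≤ M ^ 3 + M ^ 3 + 4 * √a * L ^ 2 * M ^ 3 :=
      add_le_add (add_le_add ((abs_cstar_sub_le hL ha hb h).trans hM3)
        ((abs_intervalAverage_le hL h).trans hM3)) hQ
    _ = (2 + 4 * √a * L ^ 2) * M ^ 3 := by ring

theorem exists_abs_cstar_sub_le (hL : 0 < L) (ha : 0 < a) :
    ∃ C > 0, ∀ (b : ℝ → ℝ) (M : ℝ), ContinuousOn b (Icc 0 L) → (∀ y ∈ Icc 0 L, |b y| ≤ M) →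
      |cstar L a b - 2 * √a - (⨍ y in (0 : ℝ)..L, b y) - √a * enhancement L b| ≤ C * M ^ 3 := by
  set T := 2 * √a + 2 + 4 * √a * L ^ 2 with hT
  have hsT : √a ≤ T := by
    have : 0 ≤ 4 * √a * L ^ 2 := by positivity
    linarith [sqrt_nonneg a]
  let C₁ := 32 * L ^ 4 * T ^ 2 + 64 * L ^ 6 * T ^ 3
  refine ⟨2 + 4 * √a * L ^ 2 + (C₁ + 4 * T * L ^ 4), by positivity, fun b M hb h => ?_⟩
  have hM0 : 0 ≤ M := (abs_nonneg _).trans (h 0 (left_mem_Icc.2 hL.le))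
  rw [add_mul]
  have hlarge : 0 ≤ (2 + 4 * √a * L ^ 2) * M ^ 3 := by positivity
  have hcutoff : 0 ≤ 4 * T * L ^ 4 * M ^ 3 := by positivity
  rcases le_total M 1 with hM1 | hM1
  · have hle : _ ≤ _ + C₁ * M ^ 3 := cstar_le_of_abs_le_one hL ha hsT hb h hM0 hM1
    have hge : _ - (C₁ + 4 * T * L ^ 4) * M ^ 3 ≤ _ :=
      le_cstar_of_abs_le_one hL ha.le hT.ge hb h hM0 hM1
    exact abs_le.2 ⟨by linarith, by linarith⟩
  · exact (abs_cstar_sub_le_of_one_le hL ha hb h hM1).trans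
      (le_add_of_nonneg_right (by positivity))

end FrontSpeed

section ExponentialCovariance

/-- The closed form of `∫₀ˢ ∫₀ᵗ exp (-A |u - v|) dv du` for `0 ≤ s ≤ t`: the covariance, per unit
variance, of the integrals over `[0, s]` and `[0, t]` of a stationary Ornstein–Uhlenbeck path. -/
noncomputable def integratedExpCov (A s t : ℝ) : ℝ :=
  (2 * s - (1 - exp (-A * s)) / A - (exp (-A * (t - s)) - exp (-A * t)) / A) / A

variable {A L : ℝ}

theorem hasDerivAt_exp_neg_mul (A x : ℝ) :
    HasDerivAt (fun y => exp (-A * y)) (-A * exp (-A * x)) x := by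
  simpa [mul_comm] using ((hasDerivAt_id x).const_mul (-A)).exp

theorem hasDerivAt_exp_neg_mul_const_sub (A t x : ℝ) :
    HasDerivAt (fun y => exp (-A * (t - y))) (A * exp (-A * (t - x))) x := by
  simpa [mul_comm] using (((hasDerivAt_id x).const_sub t).const_mul (-A)).exp

theorem integral_exp_neg_mul (hA : A ≠ 0) (x : ℝ) :
    ∫ v in (0 : ℝ)..x, exp (-A * v) = (1 - exp (-A * x)) / A := by
  rw [integral_comp_mul_left _ (neg_ne_zero.2 hA), integral_exp, mul_zero, exp_zero, smul_eq_mul]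
  field_simp
  ring

theorem integral_exp_neg_mul_abs_sub (hA : A ≠ 0) {u t : ℝ} (hu : u ∈ Icc 0 t) :
    ∫ v in (0 : ℝ)..t, exp (-A * |u - v|) =
      (1 - exp (-A * u)) / A + (1 - exp (-A * (t - u))) / A := by
  have hc : Continuous fun v => exp (-A * |u - v|) := by fun_prop
  have hleft : ∫ v in (0 : ℝ)..u, exp (-A * |u - v|) = ∫ v in (0 : ℝ)..u, exp (-A * (u - v)) :=
    integral_congr fun v hv => by
      rw [uIcc_of_le hu.1] at hv
      simp only [abs_of_nonneg (sub_nonneg.2 hv.2)]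
  have hright : ∫ v in u..t, exp (-A * |u - v|) = ∫ v in u..t, exp (-A * (v - u)) :=
    integral_congr fun v hv => by
      rw [uIcc_of_le hu.2] at hv
      simp only [abs_sub_comm u v, abs_of_nonneg (sub_nonneg.2 hv.1)]
  rw [← integral_add_adjacent_intervals (hc.intervalIntegrable 0 u) (hc.intervalIntegrable u t),
    hleft, hright, integral_comp_sub_left (fun v => exp (-A * v)),
    integral_comp_sub_right (fun v => exp (-A * v)), sub_self, sub_zero,
    integral_exp_neg_mul hA, integral_exp_neg_mul hA]

theorem integral_integral_exp_neg_mul_abs_sub (hA : A ≠ 0) {s t : ℝ} (hs : 0 ≤ s) (hst : s ≤ t) :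
    ∫ u in (0 : ℝ)..s, ∫ v in (0 : ℝ)..t, exp (-A * |u - v|) = integratedExpCov A s t := by
  have hinner : EqOn (fun u => ∫ v in (0 : ℝ)..t, exp (-A * |u - v|))
      (fun u => (1 - exp (-A * u)) / A + (1 - exp (-A * (t - u))) / A) (uIcc 0 s) := by
    intro u hu
    rw [uIcc_of_le hs] at hu
    exact integral_exp_neg_mul_abs_sub hA ⟨hu.1, hu.2.trans hst⟩
  rw [integral_congr hinner, integral_eq_sub_of_hasDerivAt
    (f := fun u => (2 * u + exp (-A * u) / A - exp (-A * (t - u)) / A) / A)]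
  · simp only [integratedExpCov, mul_zero, exp_zero, sub_zero]
    ring
  · intro x _
    refine (((((hasDerivAt_id x).const_mul 2).add ((hasDerivAt_exp_neg_mul A x).div_const A)).sub
      ((hasDerivAt_exp_neg_mul_const_sub A t x).div_const A)).div_const A).congr_deriv ?_
    field_simp
    ring
  · exact Continuous.intervalIntegrable (by fun_prop) _ _

theorem integral_integratedExpCov_diag (hA : A ≠ 0) (L : ℝ) :
    ∫ y in (0 : ℝ)..L, integratedExpCov A y y =
      (L ^ 2 - 2 * L / A + 2 * (1 - exp (-A * L)) / A ^ 2) / A := by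
  rw [integral_eq_sub_of_hasDerivAt
    (f := fun y => (y ^ 2 - 2 * y / A - 2 * exp (-A * y) / A ^ 2) / A)]
  · simp only [mul_zero, exp_zero]
    ring
  · intro y _
    refine (((((hasDerivAt_id y).pow 2).sub (((hasDerivAt_id y).const_mul 2).div_const A)).sub
      (((hasDerivAt_exp_neg_mul A y).const_mul 2).div_const (A ^ 2))).div_const A).congr_deriv ?_
    simp only [integratedExpCov, sub_self, mul_zero, exp_zero, id]
    field_simp
    ring
  · exact Continuous.intervalIntegrable (by unfold integratedExpCov; fun_prop) _ _

theorem integral_mul_integratedExpCov (hA : A ≠ 0) (L : ℝ) :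
    ∫ y in (0 : ℝ)..L, y * integratedExpCov A y L =
      (2 * L ^ 3 / 3 - (1 - exp (-A * L)) * L ^ 2 / (2 * A) +
        (2 * (1 - exp (-A * L)) / A - L * (1 + exp (-A * L))) / A ^ 2) / A := by
  rw [integral_eq_sub_of_hasDerivAt
    (f := fun y => (2 * y ^ 3 / 3 - (1 - exp (-A * L)) * y ^ 2 / (2 * A) -
      (y + 1 / A) * exp (-A * y) / A ^ 2 - (y - 1 / A) * exp (-A * (L - y)) / A ^ 2) / A)]
  · simp only [mul_zero, sub_self, sub_zero, exp_zero]
    ring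
  · intro y _
    have hid := hasDerivAt_id y
    have hpoly := (((hid.pow 3).const_mul 2).div_const 3).sub
      (((hid.pow 2).const_mul (1 - exp (-A * L))).div_const (2 * A))
    have hleft := ((hid.add_const (1 / A)).mul (hasDerivAt_exp_neg_mul A y)).div_const (A ^ 2)
    have hright := ((hid.sub_const (1 / A)).mul
      (hasDerivAt_exp_neg_mul_const_sub A L y)).div_const (A ^ 2)
    refine (((hpoly.sub hleft).sub hright).div_const A).congr_deriv ?_
    simp only [integratedExpCov, id]
    field_simp
    ring
  · exact Continuous.intervalIntegrable (by unfold integratedExpCov; fun_prop) _ _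

theorem intervalAverage_integratedExpCov (hA : A ≠ 0) (hL : L ≠ 0) :
    ⨍ y in (0 : ℝ)..L, (integratedExpCov A y y - 2 * (y / L) * integratedExpCov A y L +
        (y / L) ^ 2 * integratedExpCov A L L) =
      exp (-A * L) * (4 / (L ^ 2 * A ^ 4) - 1 / (3 * A ^ 2)) + L / (3 * A) -
        4 / (L ^ 2 * A ^ 4) - 5 / (3 * A ^ 2) + 4 / (L * A ^ 3) := by
  have hK : ∀ t, Continuous fun y => integratedExpCov A y t := fun t => by
    unfold integratedExpCov
    fun_prop
  have hdiag : Continuous fun y => integratedExpCov A y y := by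
    unfold integratedExpCov
    fun_prop
  have hcross : ∀ y, 2 * (y / L) * integratedExpCov A y L =
      2 / L * (y * integratedExpCov A y L) := fun y => by ring
  have hsq : ∀ y, (y / L) ^ 2 * integratedExpCov A L L =
      integratedExpCov A L L / L ^ 2 * y ^ 2 := fun y => by ring
  have hint {f : ℝ → ℝ} (hf : Continuous f) := hf.intervalIntegrable (μ := volume) 0 L
  simp only [hcross, hsq]
  rw [interval_average_eq_div, sub_zero,
    intervalIntegral.integral_add (hint (by fun_prop)) (hint (by fun_prop)),
    intervalIntegral.integral_sub (hint hdiag) (hint (by fun_prop)),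
    intervalIntegral.integral_const_mul, intervalIntegral.integral_const_mul,
    integral_integratedExpCov_diag hA, integral_mul_integratedExpCov hA, integral_pow]
  simp only [integratedExpCov, sub_self, mul_zero, exp_zero]
  push_cast
  field_simp
  ring

end ExponentialCovariance

section Measurability

variable {Ω : Type*} [MeasurableSpace Ω] {P : Measure Ω} {L a : ℝ} {b : Ω → ℝ → ℝ}

theorem aestronglyMeasurable_continuousMap_mkD {E : Type*} [NormedAddCommGroup E]
    [NormedSpace ℝ E] {f : Ω → unitInterval → E} (hf : ∀ x, AEStronglyMeasurable (f · x) P)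
    (hcont : ∀ᵐ ω ∂P, Continuous (f ω)) :
    AEStronglyMeasurable (fun ω => ContinuousMap.mkD (f ω) 0) P := by
  refine aestronglyMeasurable_of_tendsto_ae Filter.atTop
    (f := fun n ω => ∑ k : Fin (n + 1), bernstein n k • .const _ (f ω (bernstein.z k)))
    (fun n => ?_) ?_
  · have hsmul (g : C(unitInterval, ℝ)) :
        Continuous fun x : E => g • ContinuousMap.const unitInterval x :=
      ContinuousMap.continuous_of_continuous_uncurry _
        ((g.continuous.comp continuous_snd).smul continuous_fst)
    exact Finset.aestronglyMeasurable_fun_sum _ fun k _ =>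
      (hsmul _).comp_aestronglyMeasurable (hf _)
  · filter_upwards [hcont] with ω hω
    convert bernsteinApproximation_uniform (ContinuousMap.mkD (f ω) 0) using 2 with n
    simp only [bernsteinApproximation, ContinuousMap.mkD_apply_of_continuous hω]

theorem lipschitzWith_cstar_comp_projIcc (hL : 0 < L) (ha : 0 ≤ a) :
    LipschitzWith 1 fun f : C(unitInterval, ℝ) =>
      cstar L a fun y => f (projIcc 0 1 zero_le_one (y / L)) := by
  have hcont (f : C(unitInterval, ℝ)) :
      Continuous fun y => f (projIcc 0 1 zero_le_one (y / L)) :=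
    f.continuous.comp (continuous_projIcc.comp (continuous_id.div_const L))
  refine LipschitzWith.of_le_add fun f g => cstar_le_cstar_add hL ha (hcont f).continuousOn
    (hcont g).continuousOn fun y _ => ?_
  rw [← sub_le_iff_le_add']
  exact (le_abs_self _).trans ((Real.dist_eq _ _).symm.trans_le
    (ContinuousMap.dist_apply_le_dist _))

theorem aestronglyMeasurable_cstar (hL : 0 < L) (ha : 0 ≤ a)
    (hmeas : ∀ y ∈ Icc 0 L, AEStronglyMeasurable (b · y) P)
    (hpath : ∀ᵐ ω ∂P, ContinuousOn (b ω) (Icc 0 L)) :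
    AEStronglyMeasurable (fun ω => cstar L a (b ω)) P := by
  have hmem (x : unitInterval) : L * x ∈ Icc 0 L :=
    ⟨mul_nonneg hL.le x.2.1, mul_le_of_le_one_right hL.le x.2.2⟩
  have hcont : ∀ᵐ ω ∂P, Continuous fun x : unitInterval => b ω (L * x) :=
    hpath.mono fun ω h => h.comp_continuous (by fun_prop) hmem
  have hcomp := (lipschitzWith_cstar_comp_projIcc hL ha).continuous.comp_aestronglyMeasurable
    (aestronglyMeasurable_continuousMap_mkD (fun x => hmeas _ (hmem x)) hcont)
  refine hcomp.congr ?_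
  filter_upwards [hpath, hcont] with ω h hω
  refine (cstar_congr hL ha h fun y hy => ?_).symm
  have hy' : y / L ∈ Icc (0 : ℝ) 1 := ⟨div_nonneg hy.1 hL.le, (div_le_one hL).2 hy.2⟩
  rw [ContinuousMap.mkD_apply_of_continuous hω, projIcc_of_mem _ hy', mul_div_cancel₀ _ hL.ne']

theorem measurable_uncurry_integral (hb : Measurable (Function.uncurry b)) :
    Measurable (Function.uncurry fun ω y => ∫ t in (0 : ℝ)..y, b ω t) := by
  have hscaled : Measurable fun q : (Ω × ℝ) × ℝ => b q.1.1 (q.1.2 * q.2) :=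
    hb.comp (measurable_fst.fst.prodMk (measurable_fst.snd.mul measurable_snd))
  have hrw : (Function.uncurry fun ω y => ∫ t in (0 : ℝ)..y, b ω t) = fun p : Ω × ℝ =>
      p.2 * ∫ t in Ioc (0 : ℝ) 1, b p.1 (p.2 * t) := by
    ext ⟨ω, y⟩
    have hsubst := intervalIntegral.smul_integral_comp_mul_left (a := 0) (b := 1) (b ω) y
    rw [mul_zero, mul_one, integral_of_le zero_le_one] at hsubst
    exact hsubst.symm
  rw [hrw]
  exact measurable_snd.mul hscaled.stronglyMeasurable.integral_prod_right'.measurable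

theorem measurable_intervalAverage (hb : Measurable (Function.uncurry b)) (L : ℝ) :
    Measurable fun ω => ⨍ y in (0 : ℝ)..L, b ω y := by
  simp only [interval_average_eq_div]
  exact ((measurable_uncurry_integral hb).comp measurable_prodMk_right).div_const _

theorem measurable_uncurry_centeredPrimitive (hb : Measurable (Function.uncurry b)) (L : ℝ) :
    Measurable (Function.uncurry fun ω y => centeredPrimitive L (b ω) y) :=
  measurable_uncurry_integral (b := fun ω t => b ω t - ⨍ s in (0 : ℝ)..L, b ω s)
    (hb.sub ((measurable_intervalAverage hb L).comp measurable_fst))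

end Measurability

section Fubini

variable {Ω E : Type*} [MeasurableSpace Ω] {P : Measure Ω} [NormedAddCommGroup E]
  {X : Ω → ℝ → E} {G : Ω → ℝ} {α β : ℝ}

theorem integrable_uncurry_of_dominated
    (hX : AEStronglyMeasurable (Function.uncurry X) (P.prod (volume.restrict (uIoc α β))))
    (hG : Integrable G P) (h : ∀ᵐ ω ∂P, ∀ t ∈ uIoc α β, ‖X ω t‖ ≤ G ω) :
    Integrable (Function.uncurry X) (P.prod (volume.restrict (uIoc α β))) := by
  have : IsFiniteMeasure (volume.restrict (uIoc α β)) :=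
    inferInstanceAs (IsFiniteMeasure (volume.restrict (Ioc _ _)))
  refine (hG.comp_fst _).mono' hX ?_
  have hmem : ∀ᵐ t ∂volume.restrict (uIoc α β), t ∈ uIoc α β := ae_restrict_mem measurableSet_uIoc
  filter_upwards [Measure.quasiMeasurePreserving_fst.ae h,
    Measure.quasiMeasurePreserving_snd.ae hmem] with p hp ht
  exact hp _ ht

variable [NormedSpace ℝ E]

theorem integrable_intervalIntegral_of_dominated
    (hX : AEStronglyMeasurable (Function.uncurry X) (P.prod (volume.restrict (uIoc α β))))
    (hG : Integrable G P) (h : ∀ᵐ ω ∂P, ∀ t ∈ uIoc α β, ‖X ω t‖ ≤ G ω) :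
    Integrable (fun ω => ∫ t in α..β, X ω t) P := by
  simp only [intervalIntegral_eq_integral_uIoc]
  exact (integrable_uncurry_of_dominated hX hG h).integral_prod_left.smul _

theorem integral_intervalIntegral_of_dominated [SFinite P]
    (hX : AEStronglyMeasurable (Function.uncurry X) (P.prod (volume.restrict (uIoc α β))))
    (hG : Integrable G P) (h : ∀ᵐ ω ∂P, ∀ t ∈ uIoc α β, ‖X ω t‖ ≤ G ω) :
    ∫ ω, (∫ t in α..β, X ω t) ∂P = ∫ t in α..β, ∫ ω, X ω t ∂P :=
  (intervalIntegral_integral_swap (f := fun t ω => X ω t)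
    (integrable_uncurry_of_dominated hX hG h).swap).symm

end Fubini

section Moments

variable {Ω : Type*} [MeasurableSpace Ω] {P : Measure Ω} {L s t : ℝ} {b : Ω → ℝ → ℝ} {N : Ω → ℝ}

/-- The second moment `E[(∫₀ˢ b) (∫₀ᵗ b)]` of the primitive of the random field `b`, written through
the second moments of `b`. -/
noncomputable def integratedCov (P : Measure Ω) (b : Ω → ℝ → ℝ) (s t : ℝ) : ℝ :=
  ∫ u in (0 : ℝ)..s, ∫ v in (0 : ℝ)..t, ∫ ω, b ω u * b ω v ∂P

theorem uIcc_zero_subset_Icc (hs : s ∈ Icc 0 L) : uIcc 0 s ⊆ Icc 0 L :=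
  uIcc_subset_Icc (left_mem_Icc.2 (hs.1.trans hs.2)) hs

theorem uIoc_zero_subset_Icc (hs : s ∈ Icc 0 L) : uIoc 0 s ⊆ Icc 0 L :=
  uIoc_subset_uIcc.trans (uIcc_zero_subset_Icc hs)

theorem integrable_intervalAverage (hL : 0 ≤ L) (hb : Measurable (Function.uncurry b))
    (hN : ∀ᵐ ω ∂P, ∀ y ∈ Icc 0 L, |b ω y| ≤ N ω) (hN1 : Integrable N P) :
    Integrable (fun ω => ⨍ y in (0 : ℝ)..L, b ω y) P := by
  simp only [interval_average_eq_div]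
  exact (integrable_intervalIntegral_of_dominated hb.aestronglyMeasurable hN1
    (hN.mono fun _ h y hy => h y (uIoc_zero_subset_Icc (right_mem_Icc.2 hL) hy))).div_const _

theorem integral_intervalAverage [SFinite P] (hL : 0 ≤ L) (hb : Measurable (Function.uncurry b))
    (hN : ∀ᵐ ω ∂P, ∀ y ∈ Icc 0 L, |b ω y| ≤ N ω) (hN1 : Integrable N P) :
    ∫ ω, (⨍ y in (0 : ℝ)..L, b ω y) ∂P = ⨍ y in (0 : ℝ)..L, ∫ ω, b ω y ∂P := by
  simp only [interval_average_eq_div]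
  rw [MeasureTheory.integral_div, integral_intervalIntegral_of_dominated hb.aestronglyMeasurable hN1
    (hN.mono fun ω h y hy => h y (uIoc_zero_subset_Icc (right_mem_Icc.2 hL) hy))]

theorem abs_mul_integral_le {V : ℝ → ℝ} {M : ℝ} (h : ∀ y ∈ Icc 0 L, |V y| ≤ M) (hs : s ∈ Icc 0 L)
    (ht : t ∈ Icc 0 L) : |V s * ∫ v in (0 : ℝ)..t, V v| ≤ L * M ^ 2 := by
  rw [abs_mul]
  refine (mul_le_mul (h s hs) (abs_integral_le_mul h ht) (abs_nonneg _)
    ((abs_nonneg _).trans (h s hs))).trans_eq (by ring)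

theorem measurable_uncurry_mul_integral (hb : Measurable (Function.uncurry b)) (t : ℝ) :
    Measurable (Function.uncurry fun ω u => b ω u * ∫ v in (0 : ℝ)..t, b ω v) :=
  hb.mul ((measurable_uncurry_integral hb).comp (measurable_fst.prodMk measurable_const))

theorem integral_mul_integral [SFinite P] (hb : Measurable (Function.uncurry b))
    (hN : ∀ᵐ ω ∂P, ∀ y ∈ Icc 0 L, |b ω y| ≤ N ω) (hN2 : MemLp N 2 P) (hs : s ∈ Icc 0 L)
    (ht : t ∈ Icc 0 L) :
    ∫ ω, b ω s * (∫ v in (0 : ℝ)..t, b ω v) ∂P =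
      ∫ v in (0 : ℝ)..t, ∫ ω, b ω s * b ω v ∂P := by
  have hmeas : Measurable (Function.uncurry fun ω v => b ω s * b ω v) :=
    (hb.comp (measurable_fst.prodMk measurable_const)).mul hb
  simp only [← intervalIntegral.integral_const_mul]
  refine integral_intervalIntegral_of_dominated hmeas.aestronglyMeasurable hN2.integrable_sq
    (hN.mono fun ω h v hv => ?_)
  rw [norm_mul, sq]
  exact mul_le_mul (h s hs) (h v (uIoc_zero_subset_Icc ht hv)) (abs_nonneg _)
    ((abs_nonneg _).trans (h s hs))

theorem integrable_integral_mul_integral (hb : Measurable (Function.uncurry b))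
    (hN : ∀ᵐ ω ∂P, ∀ y ∈ Icc 0 L, |b ω y| ≤ N ω) (hN2 : MemLp N 2 P) (hs : s ∈ Icc 0 L)
    (ht : t ∈ Icc 0 L) :
    Integrable (fun ω => (∫ u in (0 : ℝ)..s, b ω u) * ∫ v in (0 : ℝ)..t, b ω v) P := by
  simp only [← intervalIntegral.integral_mul_const]
  exact integrable_intervalIntegral_of_dominated
    (measurable_uncurry_mul_integral hb t).aestronglyMeasurable (hN2.integrable_sq.const_mul L)
    (hN.mono fun ω h u hu => abs_mul_integral_le h (uIoc_zero_subset_Icc hs hu) ht)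

theorem integral_integral_mul_integral [SFinite P] (hb : Measurable (Function.uncurry b))
    (hN : ∀ᵐ ω ∂P, ∀ y ∈ Icc 0 L, |b ω y| ≤ N ω) (hN2 : MemLp N 2 P) (hs : s ∈ Icc 0 L)
    (ht : t ∈ Icc 0 L) :
    ∫ ω, (∫ u in (0 : ℝ)..s, b ω u) * (∫ v in (0 : ℝ)..t, b ω v) ∂P = integratedCov P b s t := by
  simp only [← intervalIntegral.integral_mul_const]
  rw [integral_intervalIntegral_of_dominated
    (measurable_uncurry_mul_integral hb t).aestronglyMeasurable (hN2.integrable_sq.const_mul L)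
    (hN.mono fun ω h u hu => abs_mul_integral_le h (uIoc_zero_subset_Icc hs hu) ht)]
  refine intervalIntegral.integral_congr fun u hu => ?_
  exact integral_mul_integral hb hN hN2 (uIcc_zero_subset_Icc hs hu) ht

theorem integral_centeredPrimitive_sq [SFinite P] (hb : Measurable (Function.uncurry b))
    (hpath : ∀ᵐ ω ∂P, ContinuousOn (b ω) (Icc 0 L))
    (hN : ∀ᵐ ω ∂P, ∀ y ∈ Icc 0 L, |b ω y| ≤ N ω) (hN2 : MemLp N 2 P) {y : ℝ} (hy : y ∈ Icc 0 L) :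
    ∫ ω, centeredPrimitive L (b ω) y ^ 2 ∂P = integratedCov P b y y -
      2 * (y / L) * integratedCov P b y L + (y / L) ^ 2 * integratedCov P b L L := by
  have hLL : L ∈ Icc 0 L := right_mem_Icc.2 (hy.1.trans hy.2)
  have hint {s t : ℝ} (hs : s ∈ Icc 0 L) (ht : t ∈ Icc 0 L) :=
    integrable_integral_mul_integral hb hN hN2 hs ht
  have hexpand : (fun ω => centeredPrimitive L (b ω) y ^ 2) =ᵐ[P] fun ω =>
      (∫ u in (0 : ℝ)..y, b ω u) * (∫ v in (0 : ℝ)..y, b ω v) -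
        2 * (y / L) * ((∫ u in (0 : ℝ)..y, b ω u) * ∫ v in (0 : ℝ)..L, b ω v) +
        (y / L) ^ 2 * ((∫ u in (0 : ℝ)..L, b ω u) * ∫ v in (0 : ℝ)..L, b ω v) := by
    filter_upwards [hpath] with ω h
    rw [centeredPrimitive_eq h hy, interval_average_eq_div, sub_zero]
    ring
  rw [MeasureTheory.integral_congr_ae hexpand,
    MeasureTheory.integral_add ?_ ((hint hLL hLL).const_mul _),
    MeasureTheory.integral_sub (hint hy hy) ((hint hy hLL).const_mul _),
    MeasureTheory.integral_const_mul, MeasureTheory.integral_const_mul,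
    integral_integral_mul_integral hb hN hN2 hy hy, integral_integral_mul_integral hb hN hN2 hy hLL,
    integral_integral_mul_integral hb hN hN2 hLL hLL]
  exact (hint hy hy).sub ((hint hy hLL).const_mul _)

theorem integrable_enhancement (hL : 0 < L) (hb : Measurable (Function.uncurry b))
    (hN : ∀ᵐ ω ∂P, ∀ y ∈ Icc 0 L, |b ω y| ≤ N ω) (hN2 : MemLp N 2 P) :
    Integrable (fun ω => enhancement L (b ω)) P :=
  integrable_intervalAverage hL.le ((measurable_uncurry_centeredPrimitive hb L).pow_const 2)
    (hN.mono fun _ h _ hy => centeredPrimitive_sq_le hL h hy) (hN2.integrable_sq.const_mul _)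

theorem integral_enhancement [SFinite P] (hL : 0 < L) (hb : Measurable (Function.uncurry b))
    (hpath : ∀ᵐ ω ∂P, ContinuousOn (b ω) (Icc 0 L))
    (hN : ∀ᵐ ω ∂P, ∀ y ∈ Icc 0 L, |b ω y| ≤ N ω) (hN2 : MemLp N 2 P) :
    ∫ ω, enhancement L (b ω) ∂P = ⨍ y in (0 : ℝ)..L, (integratedCov P b y y -
      2 * (y / L) * integratedCov P b y L + (y / L) ^ 2 * integratedCov P b L L) := by
  have hswap : ∫ ω, enhancement L (b ω) ∂P =
      ⨍ y in (0 : ℝ)..L, ∫ ω, centeredPrimitive L (b ω) y ^ 2 ∂P :=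
    integral_intervalAverage hL.le ((measurable_uncurry_centeredPrimitive hb L).pow_const 2)
      (hN.mono fun _ h _ hy => centeredPrimitive_sq_le hL h hy) (hN2.integrable_sq.const_mul _)
  rw [hswap, interval_average_eq_div, interval_average_eq_div]
  congr 1
  exact intervalIntegral.integral_congr fun y hy =>
    integral_centeredPrimitive_sq hb hpath hN hN2
      (uIcc_zero_subset_Icc (right_mem_Icc.2 hL.le) hy)

theorem integratedCov_eq_of_exp {A ρ : ℝ} (hA : A ≠ 0)
    (hcov : ∀ u ∈ Icc 0 L, ∀ v ∈ Icc 0 L, ∫ ω, b ω u * b ω v ∂P = ρ * exp (-A * |u - v|))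
    (hs : 0 ≤ s) (hst : s ≤ t) (ht : t ≤ L) :
    integratedCov P b s t = ρ * integratedExpCov A s t := by
  have hs' : s ∈ Icc 0 L := ⟨hs, hst.trans ht⟩
  have ht' : t ∈ Icc 0 L := ⟨hs.trans hst, ht⟩
  rw [← integral_integral_exp_neg_mul_abs_sub hA hs hst, ← intervalIntegral.integral_const_mul]
  refine intervalIntegral.integral_congr fun u hu => ?_
  rw [← intervalIntegral.integral_const_mul]
  exact intervalIntegral.integral_congr fun v hv =>
    hcov u (uIcc_zero_subset_Icc hs' hu) v (uIcc_zero_subset_Icc ht' hv)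

theorem integral_enhancement_of_exp [SFinite P] {A ρ : ℝ} (hL : 0 < L) (hA : A ≠ 0)
    (hb : Measurable (Function.uncurry b)) (hpath : ∀ᵐ ω ∂P, ContinuousOn (b ω) (Icc 0 L))
    (hN : ∀ᵐ ω ∂P, ∀ y ∈ Icc 0 L, |b ω y| ≤ N ω) (hN2 : MemLp N 2 P)
    (hcov : ∀ u ∈ Icc 0 L, ∀ v ∈ Icc 0 L, ∫ ω, b ω u * b ω v ∂P = ρ * exp (-A * |u - v|)) :
    ∫ ω, enhancement L (b ω) ∂P =
      ρ * (exp (-A * L) * (4 / (L ^ 2 * A ^ 4) - 1 / (3 * A ^ 2)) +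
        L / (3 * A) - 4 / (L ^ 2 * A ^ 4) - 5 / (3 * A ^ 2) + 4 / (L * A ^ 3)) := by
  rw [integral_enhancement hL hb hpath hN hN2, ← intervalAverage_integratedExpCov hA hL.ne',
    ← intervalAverage_const_mul, interval_average_eq_div, interval_average_eq_div]
  congr 1
  refine intervalIntegral.integral_congr fun y hy => ?_
  have hy' : y ∈ Icc 0 L := uIcc_zero_subset_Icc (right_mem_Icc.2 hL.le) hy
  rw [integratedCov_eq_of_exp hA hcov hy'.1 le_rfl hy'.2,
    integratedCov_eq_of_exp hA hcov hy'.1 hy'.2 le_rfl,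
    integratedCov_eq_of_exp hA hcov hL.le le_rfl le_rfl]
  ring

end Moments

section AveragedSpeed

variable {Ω : Type*} [MeasurableSpace Ω] {P : Measure Ω} {L a : ℝ} {b : Ω → ℝ → ℝ} {N : Ω → ℝ}

theorem supNorm_nonneg (L : ℝ) (V : ℝ → ℝ) : 0 ≤ supNorm L V :=
  Real.sSup_nonneg (forall_mem_image.2 fun _ _ => abs_nonneg _)

theorem abs_le_supNorm {V : ℝ → ℝ} (hV : ContinuousOn V (Icc 0 L)) {y : ℝ} (hy : y ∈ Icc 0 L) :
    |V y| ≤ supNorm L V :=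
  le_csSup (isCompact_Icc.bddAbove_image hV.abs) (mem_image_of_mem _ hy)

theorem memLp_of_integrable_pow {f : Ω → ℝ} {n : ℕ} (hn : n ≠ 0) (hf : 0 ≤ f)
    (h : Integrable (fun ω => f ω ^ n) P) : MemLp f n P := by
  have hmeas : AEStronglyMeasurable f P := by
    have hroot := (h.aemeasurable.pow_const (n⁻¹ : ℝ)).aestronglyMeasurable
    simpa only [Real.pow_rpow_inv_natCast (hf _) hn] using hroot
  refine (integrable_norm_rpow_iff hmeas (by exact_mod_cast hn) (ENNReal.natCast_ne_top n)).1 ?_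
  simpa only [ENNReal.toReal_natCast, rpow_natCast, norm_of_nonneg (hf _)] using h

theorem integrable_cstar [IsFiniteMeasure P] (hL : 0 < L) (ha : 0 < a)
    (hmeas : ∀ y ∈ Icc 0 L, AEStronglyMeasurable (b · y) P)
    (hpath : ∀ᵐ ω ∂P, ContinuousOn (b ω) (Icc 0 L))
    (hN : ∀ᵐ ω ∂P, ∀ y ∈ Icc 0 L, |b ω y| ≤ N ω) (hN1 : Integrable N P) :
    Integrable (fun ω => cstar L a (b ω)) P := by
  refine ((integrable_const (2 * √a)).add hN1).mono'
    (aestronglyMeasurable_cstar hL ha.le hmeas hpath) ?_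
  filter_upwards [hpath, hN] with ω hω hNω
  have hdiff : ‖cstar L a (b ω) - 2 * √a‖ ≤ N ω := abs_cstar_sub_le hL ha hω hNω
  calc ‖cstar L a (b ω)‖ ≤ ‖2 * √a‖ + ‖cstar L a (b ω) - 2 * √a‖ := norm_le_norm_add_norm_sub' _ _
    _ ≤ 2 * √a + N ω := by
      rw [norm_of_nonneg (by positivity)]
      gcongr

theorem exists_abs_cstar_const_mul_sub_le (hL : 0 < L) (ha : 0 < a) :
    ∃ C > 0, ∀ (V : ℝ → ℝ) (M δ : ℝ), ContinuousOn V (Icc 0 L) → (∀ y ∈ Icc 0 L, |V y| ≤ M) →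
      |cstar L a (fun y => δ * V y) - 2 * √a - δ * (⨍ y in (0 : ℝ)..L, V y) -
        √a * δ ^ 2 * enhancement L V| ≤ C * |δ| ^ 3 * M ^ 3 := by
  obtain ⟨C, hC, h⟩ := exists_abs_cstar_sub_le hL ha
  refine ⟨C, hC, fun V M δ hV hM => ?_⟩
  have hδV := h (fun y => δ * V y) (|δ| * M) (continuousOn_const.mul hV) (abs_const_mul_le δ hM)
  rwa [intervalAverage_const_mul, enhancement_const_mul, ← mul_assoc, mul_pow, ← mul_assoc] at hδV

theorem exists_abs_integral_cstar_sub_le [IsProbabilityMeasure P] (hL : 0 < L) (ha : 0 < a)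
    (hb : Measurable (Function.uncurry b)) (hpath : ∀ᵐ ω ∂P, ContinuousOn (b ω) (Icc 0 L))
    (hN : ∀ᵐ ω ∂P, ∀ y ∈ Icc 0 L, |b ω y| ≤ N ω) (hN3 : MemLp N 3 P) :
    ∃ C > 0, ∀ δ : ℝ, |(∫ ω, cstar L a (fun y => δ * b ω y) ∂P) - 2 * √a -
      δ * (∫ ω, (⨍ y in (0 : ℝ)..L, b ω y) ∂P) -
      √a * δ ^ 2 * ∫ ω, enhancement L (b ω) ∂P| ≤ C * |δ| ^ 3 := by
  obtain ⟨C, hC, hexp⟩ := exists_abs_cstar_const_mul_sub_le hL ha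
  have hN1 : Integrable N P := hN3.integrable (by norm_num)
  have hN3' : Integrable (fun ω => |N ω| ^ 3) P := hN3.integrable_norm_pow (by norm_num)
  refine ⟨C * (1 + ∫ ω, |N ω| ^ 3 ∂P), by positivity, fun δ => ?_⟩
  have hmean := (integrable_intervalAverage hL.le hb hN hN1).const_mul δ
  have henh := (integrable_enhancement hL hb hN (hN3.mono_exponent (by norm_num))).const_mul
    (√a * δ ^ 2)
  have hspeed : Integrable (fun ω => cstar L a fun y => δ * b ω y) P :=
    integrable_cstar hL ha
      (fun y _ => ((hb.comp measurable_prodMk_right).const_mul δ).aestronglyMeasurable)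
      (hpath.mono fun ω h => continuousOn_const.mul h) (hN.mono fun ω h => abs_const_mul_le δ h)
      (hN1.const_mul _)
  have hfluct : Integrable (fun ω => cstar L a (fun y => δ * b ω y) - 2 * √a) P :=
    hspeed.sub (integrable_const _)
  have hrem : ∀ᵐ ω ∂P, ‖cstar L a (fun y => δ * b ω y) - 2 * √a -
      δ * (⨍ y in (0 : ℝ)..L, b ω y) - √a * δ ^ 2 * enhancement L (b ω)‖ ≤
        C * |δ| ^ 3 * |N ω| ^ 3 := by
    filter_upwards [hpath, hN] with ω hω hNω
    exact hexp _ _ δ hω fun y hy => (hNω y hy).trans (le_abs_self _)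
  have hbound := norm_integral_le_of_norm_le (hN3'.const_mul _) hrem
  rw [MeasureTheory.integral_sub ?_ henh, MeasureTheory.integral_sub hfluct hmean,
    MeasureTheory.integral_sub hspeed (integrable_const _), MeasureTheory.integral_const,
    probReal_univ, one_smul, MeasureTheory.integral_const_mul, MeasureTheory.integral_const_mul,
    MeasureTheory.integral_const_mul] at hbound
  · refine hbound.trans ?_
    rw [mul_right_comm]
    gcongr
    exact le_add_of_nonneg_left zero_le_one
  · exact hfluct.sub hmean

end AveragedSpeed

theorem stmt14_general {Ω : Type*} [MeasurableSpace Ω] {P : Measure Ω} [IsProbabilityMeasure P]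
    {L a A ρ : ℝ} (hL : 0 < L) (ha : 0 < a) (hA : A ≠ 0) {b : Ω → ℝ → ℝ}
    (hmeas : Measurable (Function.uncurry b))
    (hpath : ∀ᵐ ω ∂P, ContinuousOn (b ω) (Icc 0 L))
    (hmean : ∀ y ∈ Icc 0 L, ∫ ω, b ω y ∂P = 0)
    (hcov : ∀ s ∈ Icc 0 L, ∀ y ∈ Icc 0 L, ∫ ω, b ω s * b ω y ∂P = ρ * exp (-A * |s - y|))
    (hmom : MemLp (fun ω => supNorm L (b ω)) 3 P) (enh : ℝ)
    (henh : enh = ρ * (exp (-A * L) * (4 / (L ^ 2 * A ^ 4) - 1 / (3 * A ^ 2)) +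
      L / (3 * A) - 4 / (L ^ 2 * A ^ 4) - 5 / (3 * A ^ 2) + 4 / (L * A ^ 3))) :
    ∃ C > 0, ∀ δ : ℝ, |(∫ ω, cstar L a (fun y => δ * b ω y) ∂P) - 2 * √a -
      (2 * √a * δ ^ 2 / 2) * enh| ≤ C * |δ| ^ 3 := by
  have hN : ∀ᵐ ω ∂P, ∀ y ∈ Icc 0 L, |b ω y| ≤ supNorm L (b ω) :=
    hpath.mono fun _ h _ hy => abs_le_supNorm h hy
  have hE_mean : ∫ ω, (⨍ y in (0 : ℝ)..L, b ω y) ∂P = 0 := by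
    rw [integral_intervalAverage hL.le hmeas hN (hmom.integrable (by norm_num)),
      interval_average_eq_div, intervalIntegral.integral_congr (g := 0) fun y hy =>
        hmean y (uIcc_zero_subset_Icc (right_mem_Icc.2 hL.le) hy)]
    simp
  have hE_enh : ∫ ω, enhancement L (b ω) ∂P = enh :=
    (integral_enhancement_of_exp hL hA hmeas hpath hN (hmom.mono_exponent (by norm_num))
      hcov).trans henh.symm
  obtain ⟨C, hC, h⟩ := exists_abs_integral_cstar_sub_le hL ha hmeas hpath hN hmom
  refine ⟨C, hC, fun δ => ?_⟩
  have hδ := h δ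
  rwa [hE_mean, hE_enh, mul_zero, sub_zero, ← mul_div_cancel_left₀ (√a * δ ^ 2) two_ne_zero,
    ← mul_assoc] at hδ

/-- explicit averaged speed formula for shears with
Ornstein–Uhlenbeck covariance `ρ e^{−A|s−y|}`: with
`enh := ρ ( e^{−AL}(4/(L²A⁴) − 1/(3A²)) + L/(3A) − 4/(L²A⁴) − 5/(3A²) + 4/(LA³) )`,
`| E[c*(δ b)] − c₀ − (c₀ δ²/2)·enh | ≤ C δ³` for all small `δ > 0`. -/
theorem stmt14 {Ω : Type*} [MeasurableSpace Ω] (P : Measure Ω) [IsProbabilityMeasure P]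
    (L a A ρ : ℝ) (hL : 0 < L) (ha : 0 < a) (hA : 0 < A) (hρ : 0 < ρ)
    (b : Ω → ℝ → ℝ)
    (hmeas : Measurable (Function.uncurry b))
    (hpath : ∀ᵐ ω ∂P, ContinuousOn (b ω) (Icc 0 L))
    (hmean : ∀ y ∈ Icc (0 : ℝ) L, (∫ ω, b ω y ∂P) = 0)
    (hcov : ∀ s ∈ Icc (0 : ℝ) L, ∀ y ∈ Icc (0 : ℝ) L,
      (∫ ω, b ω s * b ω y ∂P) = ρ * Real.exp (-A * |s - y|))
    (hmom : Integrable (fun ω => (supNorm L (b ω)) ^ 6) P)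
    (enh : ℝ)
    (henh : enh = ρ * (Real.exp (-A * L) * (4 / (L ^ 2 * A ^ 4) - 1 / (3 * A ^ 2)) +
      L / (3 * A) - 4 / (L ^ 2 * A ^ 4) - 5 / (3 * A ^ 2) + 4 / (L * A ^ 3))) :
    ∃ C > (0 : ℝ), ∃ δ₀ > (0 : ℝ), ∀ δ : ℝ, 0 < δ → δ < δ₀ →
      |(∫ ω, cstar L a (fun y => δ * b ω y) ∂P) - 2 * Real.sqrt a -
          (2 * Real.sqrt a * δ ^ 2 / 2) * enh| ≤ C * δ ^ 3 := by
  obtain ⟨C, hC, h⟩ := stmt14_general hL ha hA.ne' hmeas hpath hmean hcov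
    ((memLp_of_integrable_pow (by norm_num) (fun _ => supNorm_nonneg L _) hmom).mono_exponent
      (by norm_num)) enh henh
  exact ⟨C, hC, 1, one_pos, fun δ hδ _ => by simpa only [abs_of_pos hδ] using h δ⟩
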